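/- Mutual exclusion among siblings: for a non-atomic canonical token t, define the candidate set 𝒞_t as the set of canonical tokens w such that pre(t) ∈ P(w) and, whenever w ≠ pre(t), the canonical rule of t has strictly higher priority than the canonical rule of the unique child of pre(t) lying on the ancestor path from w to pre(t). Let k be a canonical token and let u ≠ v be two distinct non-atomic nodes of SufSucTree(k) with suc(u) = suc(v) (siblings in the tree). Then 𝒞_u ∩ 𝒞_v = ∅. -/

import Mathlib

/-!
Common BPE formalization preamble.

A token is a (nonempty) string over the alphabet `α`, modeled as `List α`.
A merge rule is a pair of tokens; a dictionary is an ordered list of rules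
(earlier rules have strictly higher priority).
-/

namespace BPE

variable {α : Type*} [DecidableEq α]

/-- A token is a string over the alphabet (nonemptiness is imposed by hypotheses). -/
abbrev Token (α : Type*) := List α

/-- A merge rule is an ordered pair of tokens. -/
abbrev Rule (α : Type*) := Token α × Token α

/-- A dictionary is an ordered list of merge rules; earlier = higher priority. -/
abbrev Dict (α : Type*) := List (Rule α)

/-- Apply a single merge rule to a token list, scanning left to right and replacing
each adjacent occurrence of `r.1` followed by `r.2` by the concatenated token,
resuming the scan after the newly formed token (no overlaps). -/
def applyRule (r : Rule α) : List (Token α) → List (Token α)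
  | [] => []
  | [t] => [t]
  | t :: u :: rest =>
      if t = r.1 ∧ u = r.2 then (r.1 ++ r.2) :: applyRule r rest
      else t :: applyRule r (u :: rest)

/-- `φ₀(s)`: the list of single-character tokens of `s`. -/
def phi0 (s : List α) : List (Token α) := s.map (fun c => [c])

/-- `φ_k(s)`: the token list after applying the first `k` rules of `D` to `s`. -/
def phiK (D : Dict α) (k : ℕ) (s : List α) : List (Token α) :=
  (D.take k).foldl (fun φ r => applyRule r φ) (phi0 s)

/-- The BPE tokenization `𝕋_D(s)`. -/
def tokenize (D : Dict α) (s : List α) : List (Token α) :=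
  phiK D D.length s

/-- Detokenization `π`: concatenation of the tokens. -/
def detok (φ : List (Token α)) : List α := φ.flatten

/-- A dictionary is valid if all rule components are genuine (nonempty) tokens. -/
def ValidDict (D : Dict α) : Prop := ∀ r ∈ D, r.1 ≠ [] ∧ r.2 ≠ []

/-- A token `t` is canonical if `𝕋_D(t) = [t]`. -/
def IsCanonical (D : Dict α) (t : Token α) : Prop := tokenize D t = [t]

/-- The last token `θ(s)`: last element of `𝕋_D(s)` (defaulting to `[]`). -/
def theta (D : Dict α) (s : List α) : Token α := (tokenize D s).getLastD []

/-- `j` (0-based) is the index of the canonical rule of `t`: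
`φ_j(t)` has exactly two tokens and `φ_{j+1}(t) = [t]`. -/
def IsCanonicalRuleIdx (D : Dict α) (t : Token α) (j : ℕ) : Prop :=
  j < D.length ∧ (phiK D j t).length = 2 ∧ phiK D (j + 1) t = [t]

open Classical in
/-- The (0-based) index of the canonical rule of `t` (junk value `0` if none exists). -/
noncomputable def canonIdx (D : Dict α) (t : Token α) : ℕ :=
  if h : ∃ j, IsCanonicalRuleIdx D t j then h.choose else 0

/-- Predecessor `pre(t)`: first token of the two-token stage `φ_{j-1}(t)`. -/
noncomputable def pre (D : Dict α) (t : Token α) : Token α :=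
  (phiK D (canonIdx D t) t).headD []

/-- Successor `suc(t)`: second token of the two-token stage `φ_{j-1}(t)`. -/
noncomputable def suc (D : Dict α) (t : Token α) : Token α :=
  (phiK D (canonIdx D t) t).getLastD []

/-- `InPath D x a` means `a ∈ P(x)`: `a` is obtained from `x` by iterating `suc`,
i.e. `a` lies on the ancestor path of `x` in the Successor Forest. -/
def InPath (D : Dict α) (x a : Token α) : Prop :=
  ∃ n : ℕ, (suc D)^[n] x = a

/-- `s` with the suffix `u` removed. -/
def dropSuffix (s u : List α) : List α := s.take (s.length - u.length)

/-- The Prefix Last-Token Condition of the canonical suffix token `t`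
with respect to the string `s`. Atomic tokens satisfy it by definition;
a non-atomic token must satisfy Reachability and Priority dominance. -/
def PLTC (D : Dict α) (s t : Token α) : Prop :=
  t.length = 1 ∨
    (1 < t.length ∧
      InPath D (theta D (dropSuffix s (suc D t))) (pre D t) ∧
      (theta D (dropSuffix s (suc D t)) ≠ pre D t →
        ∀ u : Token α, 1 < u.length → IsCanonical D u → suc D u = pre D t →
          InPath D (theta D (dropSuffix s (suc D t))) u →
          canonIdx D t < canonIdx D u))


/-- The candidate set `𝒞_t` of a non-atomic canonical token `t`: canonical tokens `w`
such that `pre t ∈ P(w)`, and whenever `w ≠ pre t`, the canonical rule of `t` has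
strictly higher priority than the canonical rule of the unique child of `pre t`
lying on the ancestor path from `w` to `pre t`. -/
def CandSet (D : Dict α) (t : Token α) : Set (Token α) :=
  {w | IsCanonical D w ∧ InPath D w (pre D t) ∧
    (w ≠ pre D t →
      ∀ u : Token α, 1 < u.length → IsCanonical D u → suc D u = pre D t →
        InPath D w u → canonIdx D t < canonIdx D u)}

theorem applyRule_flatten (r : Rule α) (X : List (Token α)) :
    (applyRule r X).flatten = X.flatten := by
  fun_induction applyRule r X with
  | case1 => rfl
  | case2 => rfl
  | case3 t u rest h ih => simp [ih, h.1, h.2]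
  | case4 t u rest h ih => rw [List.flatten_cons, ih]; simp

theorem applyRule_length (r : Rule α) (X : List (Token α)) :
    X.length ≤ 2 * (applyRule r X).length := by
  fun_induction applyRule r X with
  | case1 => simp
  | case2 => simp
  | case3 t u rest h ih => simp; omega
  | case4 t u rest h ih => simp at *; omega

theorem applyRule_split (r : Rule α) (X : List (Token α)) :
    ∀ A B, applyRule r X = A ++ B →
      ∃ A' B', X = A' ++ B' ∧ applyRule r A' = A ∧ applyRule r B' = B := by
  fun_induction applyRule r X with
  | case1 =>
    intro A B h
    have h' := h.symm
    simp at h'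
    exact ⟨[], [], by simp, by simp [h'.1, applyRule], by simp [h'.2, applyRule]⟩
  | case2 t =>
    intro A B h
    cases A with
    | nil => exact ⟨[], [t], by simp, by simp [applyRule], by simpa [applyRule] using h⟩
    | cons a A =>
      simp at h
      obtain ⟨rfl, rfl, rfl⟩ := h
      exact ⟨[t], [], by simp, by simp [applyRule], by simp [applyRule]⟩
  | case3 t u rest hc ih =>
    intro A B h
    cases A with
    | nil =>
      refine ⟨[], t :: u :: rest, by simp, by simp [applyRule], ?_⟩
      rw [applyRule, if_pos hc]; simpa using h
    | cons a A =>
      simp only [List.cons_append, List.cons.injEq] at h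
      obtain ⟨rfl, h⟩ := h
      obtain ⟨A', B', h1, h2, h3⟩ := ih A B h
      refine ⟨t :: u :: A', B', by simp [h1], ?_, h3⟩
      rw [applyRule, if_pos hc, h2]
  | case4 t u rest hc ih =>
    intro A B h
    cases A with
    | nil =>
      refine ⟨[], t :: u :: rest, by simp, by simp [applyRule], ?_⟩
      rw [applyRule, if_neg hc]; simpa using h
    | cons a A =>
      simp only [List.cons_append, List.cons.injEq] at h
      obtain ⟨rfl, h⟩ := h
      obtain ⟨A', B', h1, h2, h3⟩ := ih A B h
      refine ⟨t :: A', B', by simp [h1], ?_, h3⟩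
      cases A' with
      | nil =>
        simp only [applyRule] at h2
        subst h2
        simp [applyRule]
      | cons x A' =>
        simp only [List.cons_append, List.cons.injEq] at h1
        obtain ⟨rfl, h1⟩ := h1
        rw [applyRule, if_neg hc, h2]

theorem applyRule_head (r : Rule α) (h2 : r.2 ≠ []) (h1 : r.1 ≠ []) (X : List (Token α))
    (Y : List (Token α)) (h : applyRule r X = r.2 :: Y) : ∃ X', X = r.2 :: X' := by
  fun_induction applyRule r X with
  | case1 => simp at h
  | case2 t => simp at h; exact ⟨[], by simp [h.1]⟩
  | case3 t u rest hc ih => simp [h1] at h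
  | case4 t u rest hc ih => simp at h; exact ⟨u :: rest, by simp [h.1]⟩

theorem applyRule_no_pair (r : Rule α) (h1 : r.1 ≠ []) (h2 : r.2 ≠ []) (X : List (Token α)) :
    ∀ Z W, applyRule r X ≠ Z ++ r.1 :: r.2 :: W := by
  fun_induction applyRule r X with
  | case1 => simp
  | case2 t =>
    intro Z W h
    have := congrArg List.length h
    simp at this
    omega
  | case3 t u rest hc ih =>
    intro Z W h
    cases Z with
    | nil => simp [h2] at h
    | cons z Z => simp at h; exact ih Z W h.2
  | case4 t u rest hc ih =>
    intro Z W h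
    cases Z with
    | nil =>
      simp at h
      obtain ⟨X', hX⟩ := applyRule_head r h2 h1 _ _ h.2
      simp at hX
      exact hc ⟨h.1, hX.1⟩
    | cons z Z => simp at h; exact ih Z W h.2

theorem phiK_succ (D : Dict α) (j : ℕ) (hj : j < D.length) (s : List α) :
    phiK D (j + 1) s = applyRule D[j] (phiK D j s) := by
  unfold phiK
  rw [List.take_add_one, List.getElem?_eq_getElem hj, List.foldl_append]
  rfl

theorem phiK_succ' (D : Dict α) (j : ℕ) (hj : D.length ≤ j) (s : List α) :
    phiK D (j + 1) s = phiK D j s := by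
  unfold phiK
  rw [List.take_of_length_le hj, List.take_of_length_le (Nat.le_succ_of_le hj)]

theorem phiK_flatten (D : Dict α) (j : ℕ) (s : List α) : (phiK D j s).flatten = s := by
  induction j with
  | zero => simp [phiK, phi0, List.flatten_eq_flatMap, List.flatMap_map]
  | succ j ih =>
    rcases lt_or_ge j D.length with h | h
    · rw [phiK_succ D j h, applyRule_flatten, ih]
    · rw [phiK_succ' D j h, ih]

theorem phiK_stay (D : Dict α) (i j : ℕ) (hij : i ≤ j) (s : List α) (x : Token α)
    (h : phiK D i s = [x]) : phiK D j s = [x] := by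
  induction j, hij using Nat.le_induction with
  | base => exact h
  | succ j _ ih =>
    rcases lt_or_ge j D.length with h | h
    · rw [phiK_succ D j h, ih, applyRule]
    · rw [phiK_succ' D j h, ih]

theorem phiK_split (D : Dict α) (j : ℕ) : ∀ (s₁ s₂ : List α) (A B : List (Token α)),
    phiK D j (s₁ ++ s₂) = A ++ B → A.flatten = s₁ → B.flatten = s₂ →
    (phiK D j s₁ = A ∧ phiK D j s₂ = B) ∧
      ∀ i ≤ j, phiK D i (s₁ ++ s₂) = phiK D i s₁ ++ phiK D i s₂ := by
  induction j with
  | zero =>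
    intro s₁ s₂ A B h hA hB
    have h' : phi0 (s₁ ++ s₂) = A ++ B := by simpa [phiK] using h
    unfold phi0 at h'
    obtain ⟨l1, l2, h1, h2, h3⟩ := List.map_eq_append_iff.1 h'
    have e1 : l1 = s₁ := by
      rw [← hA, ← h2]; simp [List.flatten_eq_flatMap, List.flatMap_map]
    have e2 : l2 = s₂ := by
      rw [← hB, ← h3]; simp [List.flatten_eq_flatMap, List.flatMap_map]
    subst e1 e2
    refine ⟨⟨by simp [phiK, phi0, h2], by simp [phiK, phi0, h3]⟩, ?_⟩
    intro i hi
    obtain rfl : i = 0 := by omega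
    simp [phiK, phi0]
  | succ j ih =>
    intro s₁ s₂ A B h hA hB
    rcases lt_or_ge j D.length with hj | hj
    · have h0 := h
      rw [phiK_succ D j hj] at h
      obtain ⟨A', B', h1, h2, h3⟩ := applyRule_split _ _ _ _ h
      have := ih s₁ s₂ A' B' h1 (by rw [← hA, ← h2, applyRule_flatten])
        (by rw [← hB, ← h3, applyRule_flatten])
      obtain ⟨⟨h4, h5⟩, h6⟩ := this
      have h7 : phiK D (j+1) s₁ = A := by rw [phiK_succ D j hj, h4, h2]
      have h8 : phiK D (j+1) s₂ = B := by rw [phiK_succ D j hj, h5, h3]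
      refine ⟨⟨h7, h8⟩, ?_⟩
      intro i hi
      rcases Nat.lt_or_ge i (j+1) with hlt | hge
      · exact h6 i (by omega)
      · obtain rfl : i = j + 1 := by omega
        rw [h0, h7, h8]
    · have h0 := h
      rw [phiK_succ' D j hj] at h
      obtain ⟨⟨h4, h5⟩, h6⟩ := ih s₁ s₂ A B h hA hB
      have h7 : phiK D (j+1) s₁ = A := by rw [phiK_succ' D j hj, h4]
      have h8 : phiK D (j+1) s₂ = B := by rw [phiK_succ' D j hj, h5]
      refine ⟨⟨h7, h8⟩, ?_⟩
      intro i hi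
      rcases Nat.lt_or_ge i (j+1) with hlt | hge
      · exact h6 i (by omega)
      · obtain rfl : i = j + 1 := by omega
        rw [h0, h7, h8]

theorem exists_canonIdx (D : Dict α) (t : Token α) (ht : IsCanonical D t) (hl : 1 < t.length) :
    ∃ j, IsCanonicalRuleIdx D t j := by
  classical
  have hex : ∃ j, (phiK D j t).length ≤ 1 := ⟨D.length, by
    have : phiK D D.length t = [t] := ht
    simp [this]⟩
  have hle : Nat.find hex ≤ D.length := Nat.find_min' hex (by
    have : phiK D D.length t = [t] := ht
    simp [this])
  have hsp := Nat.find_spec hex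
  have hmin := fun m => Nat.find_min hex (m := m)
  generalize Nat.find hex = n at hle hsp hmin
  cases n with
  | zero => simp [phiK, phi0] at hsp; omega
  | succ j =>
    have hj := hmin j (by omega)
    have hfl := phiK_flatten D (j+1) t
    have hone : phiK D (j+1) t = [t] := by
      match hX : phiK D (j+1) t, hsp, hfl with
      | [], _, hfl => simp at hfl; subst hfl; simp at hl
      | [x], _, hfl => simp at hfl; rw [hfl]
    refine ⟨j, by omega, ?_, hone⟩
    have := applyRule_length D[j] (phiK D j t)
    rw [← phiK_succ D j (by omega), hone] at this
    simp at this
    omega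

theorem canon_spec (D : Dict α) (t : Token α) (ht : IsCanonical D t) (hl : 1 < t.length) :
    canonIdx D t < D.length ∧ phiK D (canonIdx D t) t = [pre D t, suc D t] ∧
      phiK D (canonIdx D t + 1) t = [t] := by
  have hex := exists_canonIdx D t ht hl
  have h : IsCanonicalRuleIdx D t (canonIdx D t) := by
    unfold canonIdx
    rw [dif_pos hex]
    exact hex.choose_spec
  refine ⟨h.1, ?_, h.2.2⟩
  unfold pre suc
  obtain ⟨a, b, hab⟩ := List.length_eq_two.1 h.2.1
  rw [hab]; simp

theorem canon_decomp (D : Dict α) (t : Token α) (ht : IsCanonical D t) (hl : 1 < t.length) :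
    t = pre D t ++ suc D t ∧ phiK D (canonIdx D t) (pre D t) = [pre D t] ∧
    phiK D (canonIdx D t) (suc D t) = [suc D t] ∧
    ∀ i ≤ canonIdx D t, phiK D i t = phiK D i (pre D t) ++ phiK D i (suc D t) := by
  obtain ⟨h1, h2, h3⟩ := canon_spec D t ht hl
  have hfl := phiK_flatten D (canonIdx D t) t
  rw [h2] at hfl
  simp at hfl
  have h2' : phiK D (canonIdx D t) (pre D t ++ suc D t) = [pre D t] ++ [suc D t] := by
    rw [hfl, h2]; rfl
  obtain ⟨⟨h4, h5⟩, h6⟩ := phiK_split D _ _ _ _ _ h2' (by simp) (by simp)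
  rw [hfl] at h6
  exact ⟨hfl.symm, h4, h5, h6⟩

theorem suc_small (D : Dict α) (t : Token α) (ht : IsCanonical D t) (hl : ¬ 1 < t.length) :
    suc D t = t := by
  have hstay : phiK D 0 t = [t] := by
    match t, ht, hl with
    | [], ht, _ =>
      exfalso
      have h0 : ∀ j, phiK D j ([] : List α) = [] := by
        intro j
        induction j with
        | zero => simp [phiK, phi0]
        | succ j ih =>
          rcases lt_or_ge j D.length with h | h
          · rw [phiK_succ D j h, ih, applyRule]
          · rw [phiK_succ' D j h, ih]
      have h1 : phiK D D.length ([] : List α) = [[]] := ht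
      rw [h0] at h1
      simp at h1
    | [a], _, _ => simp [phiK, phi0]
    | a :: b :: l, _, hl => simp at hl
  have := phiK_stay D 0 (canonIdx D t) (Nat.zero_le _) t t hstay
  unfold suc
  rw [this]; simp

theorem suc_canon (D : Dict α) (t : Token α) (ht : IsCanonical D t) : IsCanonical D (suc D t) := by
  by_cases hl : 1 < t.length
  · have h := canon_decomp D t ht hl
    exact phiK_stay D _ _ (canon_spec D t ht hl).1.le _ _ h.2.2.1
  · rwa [suc_small D t ht hl]

theorem pre_canon (D : Dict α) (t : Token α) (ht : IsCanonical D t) (hl : 1 < t.length) :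
    IsCanonical D (pre D t) := by
  have h := canon_decomp D t ht hl
  exact phiK_stay D _ _ (canon_spec D t ht hl).1.le _ _ h.2.1

theorem suc_len (D : Dict α) (t : Token α) (ht : IsCanonical D t) :
    (suc D t).length ≤ t.length := by
  by_cases hl : 1 < t.length
  · have h := congrArg List.length (canon_decomp D t ht hl).1
    simp at h
    omega
  · rw [suc_small D t ht hl]

theorem iter_len (D : Dict α) (n : ℕ) : ∀ t, IsCanonical D t →
    ((suc D)^[n] t).length ≤ t.length := by
  induction n with
  | zero => simp
  | succ n ih =>
    intro t ht
    rw [Function.iterate_succ_apply]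
    exact (ih _ (suc_canon D t ht)).trans (suc_len D t ht)

theorem path_child (D : Dict α) (a : Token α) (n : ℕ) : ∀ x, IsCanonical D x →
    (suc D)^[n] x = a → x ≠ a →
    ∃ c, 1 < c.length ∧ IsCanonical D c ∧ suc D c = a ∧ InPath D x c := by
  induction n with
  | zero => intro x _ h hne; exact absurd h hne
  | succ n ih =>
    intro x hx h hne
    rw [Function.iterate_succ_apply] at h
    by_cases hs : suc D x = a
    · refine ⟨x, ?_, hx, hs, 0, rfl⟩
      by_contra hl
      exact hne ((suc_small D x hx hl).symm.trans hs)
    · obtain ⟨c, h1, h2, h3, m, hm⟩ := ih _ (suc_canon D x hx) h hs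
      exact ⟨c, h1, h2, h3, m + 1, by rw [Function.iterate_succ_apply]; exact hm⟩

theorem path_last (D : Dict α) (c : Token α) (hc : IsCanonical D c) (hcl : 1 < c.length) (n : ℕ) :
    ∀ x, IsCanonical D x → (suc D)^[n] x = c →
    ∀ i ≤ canonIdx D c, ∃ Y, phiK D i x = Y ++ phiK D i c := by
  induction n with
  | zero => intro x _ h i _; exact ⟨[], by simp at h; simp [h]⟩
  | succ n ih =>
    intro x hx h i hi
    rw [Function.iterate_succ_apply] at h
    have ih' := ih _ (suc_canon D x hx) h
    by_cases hl : 1 < x.length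
    · obtain ⟨h1, h2, h3, h4⟩ := canon_decomp D x hx hl
      have hlt : canonIdx D c < canonIdx D x := by
        by_contra hge
        obtain ⟨Y, hY⟩ := ih' _ le_rfl
        rw [phiK_stay D _ _ (not_lt.1 hge) _ _ h3, (canon_spec D c hc hcl).2.1] at hY
        have := congrArg List.length hY
        simp at this
      obtain ⟨Y, hY⟩ := ih' i hi
      exact ⟨phiK D i (pre D x) ++ Y, by rw [h4 i (by omega), hY, List.append_assoc]⟩
    · rw [suc_small D x hx hl] at ih'
      exact ih' i hi

theorem excl_aux (D : Dict α) (hD : ValidDict D) (u v : Token α)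
    (hu : IsCanonical D u) (hul : 1 < u.length)
    (hv : IsCanonical D v) (hvl : 1 < v.length)
    (hsuc : suc D u = suc D v) (hlen : u.length < v.length)
    (w : Token α) (hwu : w ∈ CandSet D u) (hwv : w ∈ CandSet D v) : False := by
  obtain ⟨u1, u2, u3, u4⟩ := canon_decomp D u hu hul
  obtain ⟨v1, v2, v3, v4⟩ := canon_decomp D v hv hvl
  have hpl : (pre D u).length < (pre D v).length := by
    have e1 := congrArg List.length u1
    have e2 := congrArg List.length v1
    simp only [List.length_append] at e1 e2
    rw [hsuc] at e1
    omega
  obtain ⟨hw, ⟨a, ha⟩, hpr⟩ := hwu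
  obtain ⟨_, ⟨b, hb⟩, _⟩ := hwv
  have hpu := pre_canon D u hu hul
  have hpv := pre_canon D v hv hvl
  have hba : b ≤ a := by
    by_contra hlt
    obtain ⟨d, rfl⟩ := Nat.exists_eq_add_of_le (not_le.1 hlt).le
    rw [Nat.add_comm, Function.iterate_add_apply, ha] at hb
    have := iter_len D d _ hpu
    rw [hb] at this
    omega
  obtain ⟨d, rfl⟩ := Nat.exists_eq_add_of_le hba
  rw [Nat.add_comm, Function.iterate_add_apply, hb] at ha
  obtain ⟨c, c1, c2, c3, m, hm⟩ := path_child D _ d _ hpv ha (by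
    intro h; rw [h] at hpl; omega)
  have hne : w ≠ pre D u := by
    rintro rfl
    have := iter_len D b _ hpu
    rw [hb] at this
    omega
  have hidx := hpr hne c c1 c2 c3 ⟨m + b, by rw [Function.iterate_add_apply, hb, hm]⟩
  have hlast := path_last D c c2 c1 m _ hpv hm
  obtain ⟨_, s2, _⟩ := canon_spec D c c2 c1
  have hcv : canonIdx D c < canonIdx D v := by
    by_contra hge
    obtain ⟨Y, hY⟩ := hlast _ le_rfl
    rw [phiK_stay D _ _ (not_lt.1 hge) _ _ v2, s2] at hY
    have := congrArg List.length hY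
    simp at this
  obtain ⟨_, _, _, d4⟩ := canon_decomp D c c2 c1
  obtain ⟨Y, hY⟩ := hlast (canonIdx D u + 1) hidx
  obtain ⟨t1, t2, t3⟩ := canon_spec D u hu hul
  have hv' := v4 (canonIdx D u + 1) (by omega)
  rw [hY, d4 _ hidx, c3, phiK_stay D _ _ (Nat.le_succ _) _ _ u2, ← hsuc,
    phiK_stay D _ _ (Nat.le_succ _) _ _ u3, phiK_succ D _ t1] at hv'
  rw [phiK_succ D _ t1, t2] at t3
  have hval := hD D[canonIdx D u] (List.getElem_mem t1)
  generalize D[canonIdx D u] = r at hv' t3 hval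
  have hr : pre D u = r.1 ∧ suc D u = r.2 := by
    by_contra hc
    rw [applyRule, if_neg hc] at t3
    simp [applyRule] at t3
  rw [hr.1, hr.2] at hv'
  exact applyRule_no_pair r hval.1 hval.2 _ (Y ++ phiK D (canonIdx D u + 1) (pre D c)) []
    (by rw [hv']; simp)

/-- **Mutual exclusion among siblings.** If `u ≠ v` are distinct non-atomic nodes of
`SufSucTree(k)` with `suc u = suc v`, then `𝒞_u ∩ 𝒞_v = ∅`. -/
theorem sibling_mutual_exclusion [Fintype α] (D : Dict α) (hD : ValidDict D)
    (k : Token α) (hkc : IsCanonical D k)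
    (u v : Token α) (huv : u ≠ v)
    (hu : IsCanonical D u) (hul : 1 < u.length) (hus : u <:+ k)
    (hv : IsCanonical D v) (hvl : 1 < v.length) (hvs : v <:+ k)
    (hsuc : suc D u = suc D v) :
    CandSet D u ∩ CandSet D v = ∅ := by
  ext w
  simp only [Set.mem_inter_iff, Set.mem_empty_iff_false, iff_false, not_and]
  intro hwu hwv
  rcases lt_trichotomy u.length v.length with h | h | h
  · exact excl_aux D hD u v hu hul hv hvl hsuc h w hwu hwv
  · apply huv
    exact (List.suffix_of_suffix_length_le hus hvs h.le).eq_of_length h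
  · exact excl_aux D hD v u hv hvl hu hul hsuc.symm h w hwv hwu

end BPE
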